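/- arXiv:2512.13519 — 2 statements merged into one kernel-verified Lean document; each statement's English description precedes it below -/
import Mathlib

section
/- Let γ ∈ SL(2,ℝ) have entries a, b, c, d and let t ∈ ℝ. Then the hyperbolic distance between the points i·e^t and γ·(i·e^t) of the upper half-plane is given by dist(i·e^t, γ·(i·e^t)) = 2·arsinh( √(b²·e^{−2t} + c²·e^{2t} + a² + d² − 2) / 2 ); in particular b²·e^{−2t} + c²·e^{2t} + a² + d² − 2 ≥ 0. -/
open UpperHalfPlane Matrix
open scoped MatrixGroups

/-!
For `g = (a b; c d)` of positive determinant, `z - g • z = P(z) / (cz + d)`, where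
`P(z) = cz² + (d - a)z - b` is the fixed-point polynomial of `g`, while
`Im (g • z) = det g · Im z / |cz + d|²`.
The factor `|cz + d|` therefore cancels from `|z - g • z| / √(Im z · Im (g • z))`, leaving
`|P(z)| / (Im z · √(det g))`. At `z = iy` one has `|P(iy)|² / y² = (b/y + cy)² + (a - d)²`, and
`ad - bc = det g` turns this sum of squares into `b²/y² + c²y² + a² + d² - 2 det g`.
-/

section Displacement

open Polynomial

variable {g : GL (Fin 2) ℝ}

lemma coe_sub_coe_smul_of_det_pos (hg : 0 < g.det.val) (z : ℍ) :
    (z : ℂ) - ↑(g • z) = aeval (z : ℂ) g.fixpointPolynomial / denom g z := by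
  rw [coe_smul_of_det_pos hg, eq_div_iff (denom_ne_zero g z), sub_mul,
    div_mul_cancel₀ _ (denom_ne_zero g z)]
  simp only [num, denom, GeneralLinearGroup.fixpointPolynomial, map_sub, map_add, map_mul,
    map_pow, aeval_X, aeval_C, Complex.coe_algebraMap]
  ring

lemma sqrt_im_mul_im_smul_of_det_pos (hg : 0 < g.det.val) (z : ℍ) :
    √(z.im * (g • z).im) = z.im * √g.det.val / ‖denom g z‖ := by
  have h : z.im * (g • z).im = (z.im / ‖denom g z‖) ^ 2 * g.det.val := by
    rw [im_smul_eq_div_normSq, abs_of_pos hg, Complex.normSq_eq_norm_sq]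
    ring
  rw [h, Real.sqrt_mul (sq_nonneg _),
    Real.sqrt_sq (div_nonneg z.im_pos.le (norm_nonneg _)), div_mul_eq_mul_div]

theorem dist_smul_of_det_pos (hg : 0 < g.det.val) (z : ℍ) :
    dist z (g • z) = 2 * Real.arsinh
      (‖aeval (z : ℂ) g.fixpointPolynomial‖ / (2 * (z.im * √g.det.val))) := by
  have hdenom : ‖denom g z‖ ≠ 0 := norm_ne_zero_iff.2 (denom_ne_zero g z)
  rw [UpperHalfPlane.dist_eq, Complex.dist_eq, coe_sub_coe_smul_of_det_pos hg, norm_div,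
    sqrt_im_mul_im_smul_of_det_pos hg, ← mul_div_assoc, div_div_div_cancel_right₀ hdenom]

lemma norm_aeval_fixpointPolynomial_I_mul (g : GL (Fin 2) ℝ) {y : ℝ} (hy : 0 < y) :
    ‖aeval (Complex.I * y) g.fixpointPolynomial‖ =
      y * √((g 0 1 / y + g 1 0 * y) ^ 2 + (g 0 0 - g 1 1) ^ 2) := by
  have h : aeval (Complex.I * y) g.fixpointPolynomial =
      -(y * ((g 0 1 / y + g 1 0 * y : ℝ) + (g 0 0 - g 1 1 : ℝ) * Complex.I)) := by
    have hy' : (y : ℂ) ≠ 0 := Complex.ofReal_ne_zero.2 hy.ne'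
    simp only [GeneralLinearGroup.fixpointPolynomial, map_sub, map_add, map_mul, map_pow,
      aeval_X, aeval_C, Complex.coe_algebraMap]
    push_cast
    field_simp
    linear_combination (g 1 0 : ℂ) * y ^ 2 * Complex.I_sq
  rw [h, norm_neg, norm_mul, Complex.norm_of_nonneg hy.le, Complex.norm_add_mul_I]

theorem dist_smul_of_coe_eq_I_mul (hg : 0 < g.det.val) {z : ℍ} {y : ℝ}
    (hz : (z : ℂ) = Complex.I * y) :
    dist z (g • z) = 2 * Real.arsinh
      (√((g 0 1 / y + g 1 0 * y) ^ 2 + (g 0 0 - g 1 1) ^ 2) / (2 * √g.det.val)) := by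
  have him : z.im = y := by rw [← coe_im, hz, Complex.I_mul_im, Complex.ofReal_re]
  have hy : 0 < y := him ▸ z.im_pos
  rw [dist_smul_of_det_pos hg, hz, him, norm_aeval_fixpointPolynomial_I_mul g hy,
    mul_left_comm 2 y, mul_div_mul_left _ _ hy.ne']

end Displacement

lemma dist_specialLinearGroup_smul_of_coe_eq_I_mul (γ : SL(2, ℝ)) {z : ℍ} {y : ℝ}
    (hz : (z : ℂ) = Complex.I * y) :
    dist z (γ • z) = 2 * Real.arsinh
      (√((γ 0 1 / y + γ 1 0 * y) ^ 2 + (γ 0 0 - γ 1 1) ^ 2) / 2) := by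
  rw [MulAction.compHom_smul_def]
  simpa using dist_smul_of_coe_eq_I_mul (g := SpecialLinearGroup.mapGL ℝ γ) (by simp) hz

lemma sq_add_sq_eq_sub_two_mul_det {K : Type*} [Field K] (a b c d : K) {y : K} (hy : y ≠ 0) :
    (b / y + c * y) ^ 2 + (a - d) ^ 2 =
      b ^ 2 * (y ^ 2)⁻¹ + c ^ 2 * y ^ 2 + a ^ 2 + d ^ 2 - 2 * (a * d - b * c) := by
  field

/-- For `γ = (a b; c d) ∈ SL(2,ℝ)` and `t ∈ ℝ`, the hyperbolic distance
between `i·e^t` and `γ • (i·e^t)` equals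
`2·arsinh(√(b²e^{−2t} + c²e^{2t} + a² + d² − 2)/2)`; in particular the radicand is
nonnegative. -/
theorem stmt4 (γ : SL(2, ℝ)) (a b c d : ℝ)
    (ha : a = γ 0 0) (hb : b = γ 0 1) (hc : c = γ 1 0) (hd : d = γ 1 1) (t : ℝ) :
    dist (UpperHalfPlane.mk (Complex.I * Real.exp t)
        (by simp [Complex.exp_ofReal_re, Real.exp_pos]))
      (γ • UpperHalfPlane.mk (Complex.I * Real.exp t)
        (by simp [Complex.exp_ofReal_re, Real.exp_pos]) : ℍ) =
      2 * Real.arsinh (Real.sqrt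
        (b ^ 2 * Real.exp (-2 * t) + c ^ 2 * Real.exp (2 * t) + a ^ 2 + d ^ 2 - 2) / 2) ∧
    0 ≤ b ^ 2 * Real.exp (-2 * t) + c ^ 2 * Real.exp (2 * t) + a ^ 2 + d ^ 2 - 2 := by
  have hdet : a * d - b * c = 1 := by
    rw [ha, hb, hc, hd, ← Matrix.det_fin_two, γ.det_coe]
  have hexp : Real.exp (2 * t) = Real.exp t ^ 2 := by
    rw [← Real.exp_nat_mul, Nat.cast_ofNat]
  have hradicand : b ^ 2 * Real.exp (-2 * t) + c ^ 2 * Real.exp (2 * t) + a ^ 2 + d ^ 2 - 2 =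
      (b / Real.exp t + c * Real.exp t) ^ 2 + (a - d) ^ 2 := by
    rw [neg_mul, Real.exp_neg, hexp, sq_add_sq_eq_sub_two_mul_det a b c d (Real.exp_ne_zero t),
      hdet, mul_one]
  rw [hradicand]
  refine ⟨?_, by positivity⟩
  rw [ha, hb, hc, hd]
  exact dist_specialLinearGroup_smul_of_coe_eq_I_mul γ rfl
end

section
/- Let γ ∈ SL(2,ℝ) have entries a, b, c, d with b ≠ 0, and set t = log|b|. Then the hyperbolic distance between i·e^t and γ·(i·e^t) in the upper half-plane equals 2·arsinh( √(b²c² + a² + d² − 1) / 2 ). -/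
open UpperHalfPlane Matrix
open scoped MatrixGroups

/-!
For `g = (a b; c d)` of determinant `D > 0`, substitute `g • z = (az + b)/(cz + d)` and
`Im (g • z) = D · Im z / |cz + d|²` into the distance formula: the factor `|cz + d|` cancels, and
`sinh (dist w (g • z) / 2) = |w(cz + d) - (az + b)| / (2√(D · Im w · Im z))`. At `w = z = iy` the
right side is `√((cy + b/y)² + (d - a)²) / (2√D)`. The height `y = |b|` makes `b/y` a sign, so that
`(cy + b/y)² = (bc + 1)²`, and `ad - bc = D` removes the mixed terms `2bc` and `-2ad`.
-/

theorem dist_smul_eq_norm_mul_denom_sub_num {g : GL (Fin 2) ℝ} (hg : 0 < g.det.val) (w z : ℍ) :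
    dist w (g • z) =
      2 * Real.arsinh (‖(w : ℂ) * denom g z - num g z‖ / (2 * √(g.det.val * (w.im * z.im)))) := by
  have hdenom : (0 : ℝ) < ‖denom g z‖ := norm_pos_iff.mpr (denom_ne_zero g z)
  have hdist : dist (w : ℂ) (g • z : ℍ) =
      ‖(w : ℂ) * denom g z - num g z‖ / ‖denom g z‖ := by
    rw [Complex.dist_eq, coe_smul_of_det_pos hg, ← norm_div, sub_div,
      mul_div_cancel_right₀ _ (denom_ne_zero g z)]
  have him : √(w.im * (g • z).im) = √(g.det.val * (w.im * z.im)) / ‖denom g z‖ := by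
    rw [im_smul_eq_div_normSq, abs_of_pos hg, Complex.normSq_eq_norm_sq, ← mul_div_assoc,
      mul_left_comm, Real.sqrt_div' _ (sq_nonneg _), Real.sqrt_sq hdenom.le]
  rw [UpperHalfPlane.dist_eq, hdist, him, ← mul_div_assoc, div_div_div_cancel_right₀ hdenom.ne']

theorem norm_mul_denom_sub_num_of_re_eq_zero (g : GL (Fin 2) ℝ) {z : ℍ} (hz : z.re = 0) :
    ‖(z : ℂ) * denom g z - num g z‖ =
      z.im * √((g 1 0 * z.im + g 0 1 / z.im) ^ 2 + (g 1 1 - g 0 0) ^ 2) := by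
  have hzI : (z : ℂ) = z.im * Complex.I := Complex.ext (by simp [hz]) (by simp)
  have hval : (z : ℂ) * denom g z - num g z =
      (-(g 1 0 * z.im ^ 2 + g 0 1) : ℝ) + ((g 1 1 - g 0 0) * z.im : ℝ) * Complex.I := by
    rw [denom, num, hzI]
    push_cast
    linear_combination (g 1 0 : ℂ) * z.im ^ 2 * Complex.I_sq
  have him : z.im ≠ 0 := z.im_ne_zero
  rw [hval, Complex.norm_add_mul_I, ← Real.sqrt_sq z.im_pos.le, ← Real.sqrt_mul (sq_nonneg _),
    Real.sqrt_sq z.im_pos.le]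
  congr 1
  field_simp

theorem dist_smul_self_of_re_eq_zero {g : GL (Fin 2) ℝ} (hg : 0 < g.det.val) {z : ℍ}
    (hz : z.re = 0) :
    dist z (g • z) =
      2 * Real.arsinh (√((g 1 0 * z.im + g 0 1 / z.im) ^ 2 + (g 1 1 - g 0 0) ^ 2) /
        (2 * √g.det.val)) := by
  rw [dist_smul_eq_norm_mul_denom_sub_num hg, norm_mul_denom_sub_num_of_re_eq_zero g hz,
    Real.sqrt_mul hg.le, Real.sqrt_mul_self z.im_pos.le, ← mul_assoc, mul_comm z.im (√_),
    mul_div_mul_right _ _ z.im_ne_zero]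

theorem dist_smul_self_of_re_eq_zero_of_im_eq_abs {g : GL (Fin 2) ℝ} (hg : 0 < g.det.val)
    (hb : g 0 1 ≠ 0) {z : ℍ} (hre : z.re = 0) (him : z.im = |g 0 1|) :
    dist z (g • z) =
      2 * Real.arsinh (√(g 0 1 ^ 2 * g 1 0 ^ 2 + g 0 0 ^ 2 + g 1 1 ^ 2 - (2 * g.det.val - 1)) /
        (2 * √g.det.val)) := by
  have hdet : g.det.val = g 0 0 * g 1 1 - g 0 1 * g 1 0 := det_fin_two g.val
  have hsq : (g 1 0 * |g 0 1| + g 0 1 / |g 0 1|) ^ 2 = (g 0 1 * g 1 0 + 1) ^ 2 := by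
    have hb' : |g 0 1| ≠ 0 := abs_ne_zero.mpr hb
    field_simp
    rw [sq_abs]
    ring
  rw [dist_smul_self_of_re_eq_zero hg hre, him, hsq]
  congr 4
  rw [hdet]
  ring

theorem stmt5_general (g : GL (Fin 2) ℝ) (hg : 0 < g.det.val) (a b c d : ℝ)
    (ha : a = g 0 0) (hb : b = g 0 1) (hc : c = g 1 0) (hd : d = g 1 1)
    (hb0 : b ≠ 0) (t : ℝ) (ht : t = Real.log |b|) (z : ℍ)
    (hz : (z : ℂ) = Complex.I * Real.exp t) :
    dist z (g • z) =
      2 * Real.arsinh (√(b ^ 2 * c ^ 2 + a ^ 2 + d ^ 2 - (2 * g.det.val - 1)) /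
        (2 * √g.det.val)) := by
  subst ha hb hc hd
  have hre : z.re = 0 := by rw [← coe_re, hz, Complex.re_mul_ofReal, Complex.I_re, zero_mul]
  have him : z.im = |g 0 1| := by
    rw [← coe_im, hz, Complex.im_mul_ofReal, Complex.I_im, one_mul, ht,
      Real.exp_log (abs_pos.mpr hb0)]
  exact dist_smul_self_of_re_eq_zero_of_im_eq_abs hg hb0 hre him

/-- For `γ = (a b; c d) ∈ SL(2,ℝ)` with `b ≠ 0` and `t = log |b|`,
the hyperbolic distance between `i·e^t` and `γ • (i·e^t)` equals
`2·arsinh(√(b²c² + a² + d² − 1)/2)`. -/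
theorem stmt5 (γ : SL(2, ℝ)) (a b c d : ℝ)
    (ha : a = γ 0 0) (hb : b = γ 0 1) (hc : c = γ 1 0) (hd : d = γ 1 1)
    (hb0 : b ≠ 0) (t : ℝ) (ht : t = Real.log |b|) :
    dist (UpperHalfPlane.mk (Complex.I * Real.exp t)
        (by simp [Complex.exp_ofReal_re, Real.exp_pos]))
      (γ • UpperHalfPlane.mk (Complex.I * Real.exp t)
        (by simp [Complex.exp_ofReal_re, Real.exp_pos]) : ℍ) =
      2 * Real.arsinh (Real.sqrt (b ^ 2 * c ^ 2 + a ^ 2 + d ^ 2 - 1) / 2) := by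
  rw [MulAction.compHom_smul_def,
    stmt5_general (SpecialLinearGroup.mapGL ℝ γ) (by simp) a b c d ha hb hc hd hb0 t ht _ rfl]
  norm_num
end
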